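/- arXiv:2510.11158 — 7 statements merged into one kernel-verified Lean document; each statement's English description precedes it below -/
import Mathlib

section
/- V is twice continuously differentiable on ℝ × ℝ^d, and for every (x,y) ∈ ℝ × ℝ^d one has (L V)(x,y) + c(x,y) − λ(y) = ∫_α^x [ (L̂ U)(z,y) + b_x(z,y)·U(z,y) + c_x(z,y) ] dz. -/
open MeasureTheory

/-- Partial derivative in the first (scalar) variable. -/
noncomputable def pdx {d : ℕ} (f : ℝ × (Fin d → ℝ) → ℝ) (p : ℝ × (Fin d → ℝ)) : ℝ :=
  deriv (fun x => f (x, p.2)) p.1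

/-- Partial derivative in the `i`-th coordinate of the second variable. -/
noncomputable def pdy {d : ℕ} (i : Fin d) (f : ℝ × (Fin d → ℝ) → ℝ) (p : ℝ × (Fin d → ℝ)) : ℝ :=
  deriv (fun t => f (p.1, Function.update p.2 i t)) (p.2 i)

/-- `(ρζ)_i(y) = ∑_j ρ_j ζ_{ij}(y)`. -/
noncomputable def rzeta {d : ℕ} (ζ : (Fin d → ℝ) → Fin d → Fin d → ℝ) (ρ : Fin d → ℝ)
    (y : Fin d → ℝ) (i : Fin d) : ℝ := ∑ j, ρ j * ζ y i j

/-- `a(y) = ζ(y) ζ(y)ᵀ`. -/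
noncomputable def amat {d : ℕ} (ζ : (Fin d → ℝ) → Fin d → Fin d → ℝ)
    (y : Fin d → ℝ) (i j : Fin d) : ℝ := ∑ k, ζ y i k * ζ y j k

/-- The generator `L̂` of the auxiliary process `(X̂, Ŷ)`, applied to `U`. -/
noncomputable def genHat {d : ℕ} (b σ' : ℝ × (Fin d → ℝ) → ℝ)
    (η : (Fin d → ℝ) → Fin d → ℝ) (ζ : (Fin d → ℝ) → Fin d → Fin d → ℝ) (ρ : Fin d → ℝ)
    (U : ℝ × (Fin d → ℝ) → ℝ) (p : ℝ × (Fin d → ℝ)) : ℝ :=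
  (b p + σ' p * pdx σ' p) * pdx U p
    + (1 / 2) * (σ' p) ^ 2 * pdx (pdx U) p
    + ∑ i, (η p.2 i + pdx σ' p * rzeta ζ ρ p.2 i) * pdy i U p
    + (1 / 2) * ∑ i, ∑ j, amat ζ p.2 i j * pdy i (pdy j U) p
    + σ' p * ∑ i, rzeta ζ ρ p.2 i * pdy i (pdx U) p

/-- The generator `L` of the uncontrolled process `(X⁰, Y)`, applied to `V`. -/
noncomputable def gen {d : ℕ} (b σ' : ℝ × (Fin d → ℝ) → ℝ)
    (η : (Fin d → ℝ) → Fin d → ℝ) (ζ : (Fin d → ℝ) → Fin d → Fin d → ℝ) (ρ : Fin d → ℝ)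
    (V : ℝ × (Fin d → ℝ) → ℝ) (p : ℝ × (Fin d → ℝ)) : ℝ :=
  b p * pdx V p
    + (1 / 2) * (σ' p) ^ 2 * pdx (pdx V) p
    + ∑ i, η p.2 i * pdy i V p
    + (1 / 2) * ∑ i, ∑ j, amat ζ p.2 i j * pdy i (pdy j V) p
    + σ' p * ∑ i, rzeta ζ ρ p.2 i * pdy i (pdx V) p

lemma hasFDerivAt_param {H E : Type*} [NormedAddCommGroup H] [NormedSpace ℝ H] [ProperSpace H]
    [NormedAddCommGroup E] [NormedSpace ℝ E] (F : H × ℝ → E)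
    (hF : ContDiff ℝ 1 F) (a b : ℝ) (x₀ : H) :
    HasFDerivAt (fun x => ∫ t in a..b, F (x, t))
      (∫ t in a..b, (fderiv ℝ F (x₀, t)).comp (ContinuousLinearMap.inl ℝ H ℝ)) x₀ := by
  have hF' : Continuous fun p : H × ℝ =>
      (fderiv ℝ F p).comp (ContinuousLinearMap.inl ℝ H ℝ) :=
    (hF.continuous_fderiv one_ne_zero).clm_comp continuous_const
  obtain ⟨C, hC⟩ := ((isCompact_closedBall x₀ 1).prod (isCompact_uIcc (a := a) (b := b))).exists_bound_of_continuousOn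
    hF'.continuousOn
  refine intervalIntegral.hasFDerivAt_integral_of_dominated_of_fderiv_le
    (F := fun x t => F (x, t))
    (F' := fun x t => (fderiv ℝ F (x, t)).comp (ContinuousLinearMap.inl ℝ H ℝ))
    (s := Metric.closedBall x₀ 1) (bound := fun _ => C)
    (Metric.closedBall_mem_nhds x₀ one_pos) ?_ ?_ ?_ ?_ ?_ ?_
  · refine Filter.Eventually.of_forall fun x => ?_
    exact (hF.continuous.comp (by fun_prop : Continuous fun t : ℝ => (x, t))).aestronglyMeasurable
  · exact (hF.continuous.comp (by fun_prop : Continuous fun t : ℝ => (x₀, t))).intervalIntegrable _ _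
  · exact (hF'.comp (by fun_prop : Continuous fun t : ℝ => (x₀, t))).aestronglyMeasurable
  · refine Filter.Eventually.of_forall fun t ht x hx => ?_
    exact hC (x, t) ⟨hx, Set.uIoc_subset_uIcc ht⟩
  · exact intervalIntegrable_const
  · refine Filter.Eventually.of_forall fun t ht x hx => ?_
    have h1 := (hF.differentiable one_ne_zero (x, t)).hasFDerivAt
    have h2 : HasFDerivAt (fun x : H => (x, t)) (ContinuousLinearMap.inl ℝ H ℝ) x :=
      hasFDerivAt_prodMk_left x t
    exact h1.comp x h2

lemma contDiff_one_param {H E : Type*} [NormedAddCommGroup H] [NormedSpace ℝ H] [ProperSpace H]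
    [NormedAddCommGroup E] [NormedSpace ℝ E] (F : H × ℝ → E)
    (hF : ContDiff ℝ 1 F) (a b : ℝ) : ContDiff ℝ 1 (fun x => ∫ t in a..b, F (x, t)) := by
  rw [contDiff_one_iff_hasFDerivAt]
  refine ⟨_, ?_, hasFDerivAt_param F hF a b⟩
  have hF' : Continuous fun p : H × ℝ =>
      (fderiv ℝ F p).comp (ContinuousLinearMap.inl ℝ H ℝ) :=
    (hF.continuous_fderiv one_ne_zero).clm_comp continuous_const
  exact intervalIntegral.continuous_parametric_intervalIntegral_of_continuous'
    (f := fun x t => (fderiv ℝ F (x, t)).comp (ContinuousLinearMap.inl ℝ H ℝ)) hF' a b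

lemma contDiff_two_param {H E : Type*} [NormedAddCommGroup H] [NormedSpace ℝ H] [ProperSpace H]
    [NormedAddCommGroup E] [NormedSpace ℝ E] (F : H × ℝ → E)
    (hF : ContDiff ℝ 2 F) (a b : ℝ) : ContDiff ℝ 2 (fun x => ∫ t in a..b, F (x, t)) := by
  have h2 : (2 : WithTop ℕ∞) = ((1 : ℕ) : WithTop ℕ∞) + 1 := by norm_num
  rw [h2, contDiff_succ_iff_hasFDerivAt]
  refine ⟨_, ?_, hasFDerivAt_param F (hF.of_le (by norm_num)) a b⟩
  refine contDiff_one_param (fun p : H × ℝ =>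
    (fderiv ℝ F p).comp (ContinuousLinearMap.inl ℝ H ℝ)) ?_ a b
  exact (hF.fderiv_right (m := 1) (by norm_num)).clm_comp contDiff_const

lemma hasDerivAt_pdx {d : ℕ} {f : ℝ × (Fin d → ℝ) → ℝ} (hf : Differentiable ℝ f)
    (x : ℝ) (y : Fin d → ℝ) :
    HasDerivAt (fun z => f (z, y)) (fderiv ℝ f (x, y) (1, 0)) x := by
  have h := (hf (x, y)).hasFDerivAt
  have h2 : HasDerivAt (fun z : ℝ => (z, y)) ((1 : ℝ), (0 : Fin d → ℝ)) x :=
    (hasDerivAt_id x).prodMk (hasDerivAt_const x y)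
  exact h.comp_hasDerivAt x h2

lemma hasDerivAt_pdy {d : ℕ} {f : ℝ × (Fin d → ℝ) → ℝ} (hf : Differentiable ℝ f) (i : Fin d)
    (x : ℝ) (y : Fin d → ℝ) :
    HasDerivAt (fun t => f (x, Function.update y i t))
      (fderiv ℝ f (x, y) (0, Pi.single i 1)) (y i) := by
  have h := (hf (x, y)).hasFDerivAt
  have h2 : HasDerivAt (fun t : ℝ => (x, Function.update y i t))
      ((0 : ℝ), (Pi.single i 1 : Fin d → ℝ)) (y i) :=
    (hasDerivAt_const _ x).prodMk (hasDerivAt_update y i (y i))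
  refine HasFDerivAt.comp_hasDerivAt (y i) ?_ h2
  simpa using h

lemma pdx_eq {d : ℕ} {f : ℝ × (Fin d → ℝ) → ℝ} (hf : Differentiable ℝ f) :
    pdx f = fun p => fderiv ℝ f p (1, 0) :=
  funext fun p => (hasDerivAt_pdx hf p.1 p.2).deriv

lemma pdy_eq {d : ℕ} {f : ℝ × (Fin d → ℝ) → ℝ} (hf : Differentiable ℝ f) (i : Fin d) :
    pdy i f = fun p => fderiv ℝ f p (0, Pi.single i 1) :=
  funext fun p => (hasDerivAt_pdy hf i p.1 p.2).deriv

lemma hasDerivAt_x {d : ℕ} {f : ℝ × (Fin d → ℝ) → ℝ} (hf : ContDiff ℝ 1 f)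
    (x : ℝ) (y : Fin d → ℝ) : HasDerivAt (fun z => f (z, y)) (pdx f (x, y)) x :=
  (hasDerivAt_pdx (hf.differentiable one_ne_zero) x y).differentiableAt.hasDerivAt

lemma contDiff_pdx {d : ℕ} {f : ℝ × (Fin d → ℝ) → ℝ} (hf : ContDiff ℝ 2 f) :
    ContDiff ℝ 1 (pdx f) := by
  rw [pdx_eq (hf.differentiable two_ne_zero)]
  exact (hf.fderiv_right (m := 1) (by norm_num)).clm_apply contDiff_const

lemma contDiff_pdy {d : ℕ} {f : ℝ × (Fin d → ℝ) → ℝ} (hf : ContDiff ℝ 2 f) (i : Fin d) :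
    ContDiff ℝ 1 (pdy i f) := by
  rw [pdy_eq (hf.differentiable two_ne_zero)]
  exact (hf.fderiv_right (m := 1) (by norm_num)).clm_apply contDiff_const

lemma continuous_pdx {d : ℕ} {f : ℝ × (Fin d → ℝ) → ℝ} (hf : ContDiff ℝ 1 f) :
    Continuous (pdx f) := by
  rw [pdx_eq (hf.differentiable one_ne_zero)]
  exact (hf.continuous_fderiv one_ne_zero).clm_apply continuous_const

lemma continuous_pdy {d : ℕ} {f : ℝ × (Fin d → ℝ) → ℝ} (hf : ContDiff ℝ 1 f) (i : Fin d) :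
    Continuous (pdy i f) := by
  rw [pdy_eq (hf.differentiable one_ne_zero)]
  exact (hf.continuous_fderiv one_ne_zero).clm_apply continuous_const

lemma pdx_pdy_comm {d : ℕ} {f : ℝ × (Fin d → ℝ) → ℝ} (hf : ContDiff ℝ 2 f) (i : Fin d)
    (p : ℝ × (Fin d → ℝ)) : pdx (pdy i f) p = pdy i (pdx f) p := by
  rw [pdx_eq ((contDiff_pdy hf i).differentiable one_ne_zero),
    pdy_eq ((contDiff_pdx hf).differentiable one_ne_zero),
    pdx_eq (hf.differentiable two_ne_zero), pdy_eq (hf.differentiable two_ne_zero)]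
  have hd : DifferentiableAt ℝ (fderiv ℝ f) p :=
    (hf.fderiv_right (m := 1) (by norm_num)).differentiable one_ne_zero p
  have hs : IsSymmSndFDerivAt ℝ f p := hf.contDiffAt.isSymmSndFDerivAt (by simp)
  have key : ∀ v w, fderiv ℝ (fun q => fderiv ℝ f q v) p w = fderiv ℝ (fderiv ℝ f) p w v := by
    intro v w
    rw [fderiv_clm_apply hd (differentiableAt_const v)]
    simp
  simp only [key]
  exact hs _ _

lemma pdy_integral {d : ℕ} {f : ℝ × (Fin d → ℝ) → ℝ} (hf : ContDiff ℝ 1 f) (i : Fin d) (α : ℝ) :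
    pdy i (fun p => ∫ z in α..p.1, f (z, p.2)) = fun p => ∫ z in α..p.1, pdy i f (z, p.2) := by
  funext p
  have hE : ContDiff ℝ 1 (fun q : (Fin d → ℝ) × ℝ => f (q.2, q.1)) :=
    hf.comp (contDiff_snd.prodMk contDiff_fst)
  have h := hasFDerivAt_param _ hE α p.1 p.2
  have h2 := hasDerivAt_update p.2 i (p.2 i)
  have h3 := HasFDerivAt.comp_hasDerivAt (x := p.2 i) (f := Function.update p.2 i)
    (by simpa using h) h2
  have h4 := h3.deriv
  refine Eq.trans h4 ?_
  have hF' : Continuous fun t : ℝ =>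
      (fderiv ℝ (fun q : (Fin d → ℝ) × ℝ => f (q.2, q.1)) (p.2, t)).comp
        (ContinuousLinearMap.inl ℝ (Fin d → ℝ) ℝ) :=
    ((hE.continuous_fderiv one_ne_zero).comp (by fun_prop)).clm_comp continuous_const
  rw [ContinuousLinearMap.intervalIntegral_apply (hF'.intervalIntegrable _ _)]
  refine intervalIntegral.integral_congr fun t _ => ?_
  have h5 := (hE.differentiable one_ne_zero (p.2, t)).hasFDerivAt
  have h6 : HasFDerivAt (fun x : Fin d → ℝ => (x, t)) (ContinuousLinearMap.inl ℝ _ ℝ) p.2 :=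
    hasFDerivAt_prodMk_left p.2 t
  have h7 := h5.comp p.2 h6
  have h8 := HasFDerivAt.comp_hasDerivAt (x := p.2 i) (f := Function.update p.2 i)
    (by simpa using h7) h2
  exact h8.deriv.symm

lemma contDiff_V {d : ℕ} {U : ℝ × (Fin d → ℝ) → ℝ} (hU : ContDiff ℝ 2 U) (α : ℝ) :
    ContDiff ℝ 2 (fun p : ℝ × (Fin d → ℝ) => ∫ z in α..p.1, U (z, p.2)) := by
  have h : (fun p : ℝ × (Fin d → ℝ) => ∫ z in α..p.1, U (z, p.2)) =
      fun p => (p.1 - α) * ∫ t in (0:ℝ)..1, U ((p.1 - α) * t + α, p.2) := by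
    funext p
    have := intervalIntegral.smul_integral_comp_mul_add (a := 0) (b := 1)
      (fun z => U (z, p.2)) (p.1 - α) α
    simp at this
    exact this.symm
  rw [h]
  refine (contDiff_fst.sub contDiff_const).mul ?_
  refine contDiff_two_param (fun q : (ℝ × (Fin d → ℝ)) × ℝ =>
    U ((q.1.1 - α) * q.2 + α, q.1.2)) ?_ 0 1
  exact hU.comp (by fun_prop)

theorem statement0 {d : ℕ} (hd : 1 ≤ d) (α : ℝ)
    (b σ c : ℝ × (Fin d → ℝ) → ℝ)
    (hb : ContDiff ℝ 1 b) (hσ : ContDiff ℝ 1 σ) (hc : ContDiff ℝ 1 c)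
    (η : (Fin d → ℝ) → Fin d → ℝ) (ζ : (Fin d → ℝ) → Fin d → Fin d → ℝ) (ρ : Fin d → ℝ)
    (U : ℝ × (Fin d → ℝ) → ℝ) (hU : ContDiff ℝ 2 U)
    (V : ℝ × (Fin d → ℝ) → ℝ)
    (hV : ∀ (x : ℝ) (y : Fin d → ℝ), V (x, y) = ∫ z in α..x, U (z, y))
    (lam : (Fin d → ℝ) → ℝ)
    (hlam : ∀ y : Fin d → ℝ, lam y = c (α, y) + U (α, y) * b (α, y)
        + (1 / 2) * (σ (α, y)) ^ 2 * pdx U (α, y)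
        + σ (α, y) * ∑ i, rzeta ζ ρ y i * pdy i U (α, y)) :
    ContDiff ℝ 2 V ∧
      ∀ (x : ℝ) (y : Fin d → ℝ),
        gen b σ η ζ ρ V (x, y) + c (x, y) - lam y
          = ∫ z in α..x,
              (genHat b σ η ζ ρ U (z, y) + pdx b (z, y) * U (z, y) + pdx c (z, y)) := by
  obtain rfl : V = fun p => ∫ z in α..p.1, U (z, p.2) := funext fun p => hV p.1 p.2
  refine ⟨contDiff_V hU α, fun x y => ?_⟩
  have hU1 : ContDiff ℝ 1 U := hU.of_le (by norm_num)
  have hUx := contDiff_pdx hU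
  have hUy := fun i => contDiff_pdy hU i
  have hVx : pdx (fun p : ℝ × (Fin d → ℝ) => ∫ z in α..p.1, U (z, p.2)) = U := by
    funext p
    have hc : Continuous fun z => U (z, p.2) := hU.continuous.comp (by fun_prop)
    exact hc.deriv_integral _ α p.1
  have ce : ∀ {f : ℝ × (Fin d → ℝ) → ℝ}, Continuous f → Continuous fun z => f (z, y) :=
    fun hf => hf.comp (by fun_prop)
  have c1 := ce hb.continuous
  have c2 := ce hσ.continuous
  have c4 := ce hU.continuous
  have c5 := ce hUx.continuous
  have c6 := fun i => ce (hUy i).continuous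
  have c7 := ce (continuous_pdx hb)
  have c8 := ce (continuous_pdx hσ)
  have c9 := ce (continuous_pdx hc)
  have c10 := ce (continuous_pdx hUx)
  have c11 := fun i j => ce (continuous_pdy (hUy j) i)
  have c12 := fun i => ce (continuous_pdy hUx i)
  let G : ℝ → ℝ := fun z => b (z, y) * U (z, y) + (1 / 2) * (σ (z, y)) ^ 2 * pdx U (z, y)
    + σ (z, y) * ∑ i, rzeta ζ ρ y i * pdy i U (z, y) + c (z, y)
  let g : ℝ → ℝ := fun z => pdx b (z, y) * U (z, y) + b (z, y) * pdx U (z, y)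
    + (σ (z, y) * pdx σ (z, y) * pdx U (z, y) + (1 / 2) * (σ (z, y)) ^ 2 * pdx (pdx U) (z, y))
    + (pdx σ (z, y) * ∑ i, rzeta ζ ρ y i * pdy i U (z, y)
      + σ (z, y) * ∑ i, rzeta ζ ρ y i * pdy i (pdx U) (z, y)) + pdx c (z, y)
  have hgc : Continuous g := by fun_prop
  have hG : ∀ z, HasDerivAt G (g z) z := by
    intro z
    have d1 := (hasDerivAt_x hb z y).mul (hasDerivAt_x hU1 z y)
    have d2 := (((hasDerivAt_x hσ z y).pow 2).const_mul (1 / 2)).mul (hasDerivAt_x hUx z y)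
    have d3 : HasDerivAt (fun z => ∑ i, rzeta ζ ρ y i * pdy i U (z, y))
        (∑ i, rzeta ζ ρ y i * pdy i (pdx U) (z, y)) z := by
      refine HasDerivAt.fun_sum fun i _ => ?_
      rw [← pdx_pdy_comm hU]
      exact (hasDerivAt_x (hUy i) z y).const_mul _
    have d4 := (hasDerivAt_x hσ z y).mul d3
    have d5 := ((d1.add d2).add d4).add (hasDerivAt_x hc z y)
    refine HasDerivAt.congr_deriv d5 ?_
    simp only [g, Pi.pow_apply]
    norm_num only [pow_one, Nat.cast_ofNat]
    ring
  have hI : ∫ z in α..x, g z = G x - G α :=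
    intervalIntegral.integral_eq_sub_of_hasDerivAt (fun z _ => hG z) (hgc.intervalIntegrable _ _)
  let k1 : ℝ → ℝ := fun z => ∑ i, η y i * pdy i U (z, y)
  let k2 : ℝ → ℝ := fun z => ∑ i, ∑ j, amat ζ y i j * pdy i (pdy j U) (z, y)
  have hk1 : Continuous k1 := by fun_prop
  have hk2 : Continuous k2 := by fun_prop
  have e : (fun z => genHat b σ η ζ ρ U (z, y) + pdx b (z, y) * U (z, y) + pdx c (z, y))
      = fun z => g z + k1 z + (1 / 2) * k2 z := by
    funext z
    simp only [genHat, g, k1, k2, add_mul, Finset.sum_add_distrib, Finset.mul_sum, mul_assoc]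
    ring
  have i1 : ∫ z in α..x, k1 z = ∑ i, η y i * ∫ z in α..x, pdy i U (z, y) := by
    rw [intervalIntegral.integral_finsetSum
      fun i _ => ((c6 i).const_mul (η y i)).intervalIntegrable _ _]
    simp only [intervalIntegral.integral_const_mul]
  have i2 : ∫ z in α..x, k2 z
      = ∑ i, ∑ j, amat ζ y i j * ∫ z in α..x, pdy i (pdy j U) (z, y) := by
    rw [intervalIntegral.integral_finsetSum fun i _ =>
      (continuous_finsetSum _ fun j _ => (c11 i j).const_mul (amat ζ y i j)).intervalIntegrable _ _]
    refine Finset.sum_congr rfl fun i _ => ?_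
    rw [intervalIntegral.integral_finsetSum
      fun j _ => ((c11 i j).const_mul (amat ζ y i j)).intervalIntegrable _ _]
    simp only [intervalIntegral.integral_const_mul]
  have hgk : Continuous fun z => g z + k1 z := hgc.add hk1
  rw [e, intervalIntegral.integral_add (hgk.intervalIntegrable _ _)
      ((hk2.const_mul _).intervalIntegrable _ _),
    intervalIntegral.integral_add (hgc.intervalIntegrable _ _) (hk1.intervalIntegrable _ _),
    intervalIntegral.integral_const_mul, hI, i1, i2, hlam]
  simp only [gen, hVx, pdy_integral hU1, pdy_integral (hUy _), G]
  ring
end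

section
/- Let F : ℝ × (0,1) → ℝ be twice continuously differentiable and define f : ℝ² → ℝ by f(x,z) := F(x, E(x,z)) with E(x,z) := exp((γ/σ)(z+x)) / (1 + exp((γ/σ)(z+x))). Then for every (x,z) ∈ ℝ²: μ(x,z)·f_x(x,z) + (σ²/2)·f_{xx}(x,z) + q(x,z)·f_z(x,z) = (L F)(x, E(x,z)), where (L F)(x,y) := (m(y) − δx)·F_x(x,y) + (σ²/2)·F_{xx}(x,y) + (λ₂ − (λ₁+λ₂)y)·F_y(x,y) + (γ²/2)·y²(1−y)²·F_{yy}(x,y) + σγ·y(1−y)·F_{xy}(x,y). -/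
/-- Partial derivative in the first variable. -/
noncomputable def pd1 (f : ℝ × ℝ → ℝ) (p : ℝ × ℝ) : ℝ := deriv (fun x => f (x, p.2)) p.1

/-- Partial derivative in the second variable. -/
noncomputable def pd2 (f : ℝ × ℝ → ℝ) (p : ℝ × ℝ) : ℝ := deriv (fun y => f (p.1, y)) p.2

/-- `E(x,z) = exp((γ/σ)(z+x)) / (1 + exp((γ/σ)(z+x)))`. -/
noncomputable def Efun (σ γ : ℝ) (x z : ℝ) : ℝ :=
  Real.exp ((γ / σ) * (z + x)) / (1 + Real.exp ((γ / σ) * (z + x)))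

/-- `m(y) = m₂ + (m₁ - m₂) y`. -/
noncomputable def mfun (m₁ m₂ : ℝ) (y : ℝ) : ℝ := m₂ + (m₁ - m₂) * y

/-- `μ(x,z) = m(E(x,z)) - δ x`. -/
noncomputable def mufun (σ γ δ m₁ m₂ : ℝ) (x z : ℝ) : ℝ :=
  mfun m₁ m₂ (Efun σ γ x z) - δ * x

/-- The drift `q(x,z)` of the finite-variation coordinate `Z`. -/
noncomputable def qfun (σ γ δ lam₁ lam₂ m₁ m₂ : ℝ) (x z : ℝ) : ℝ :=
  σ * γ * (Efun σ γ x z - 1 / 2)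
    + (σ / γ) * (1 + Real.exp (-(γ / σ) * (z + x)))
      * (lam₂ - lam₁ * Real.exp ((γ / σ) * (z + x)))
    - mfun m₁ m₂ (Efun σ γ x z) + δ * x

/-- `z(x,y) = (σ/γ) log(y/(1-y)) - x`. -/
noncomputable def zfun (σ γ : ℝ) (x y : ℝ) : ℝ := (σ / γ) * Real.log (y / (1 - y)) - x

theorem aux_pd1 {G : ℝ × ℝ → ℝ} {p : ℝ × ℝ} (h : DifferentiableAt ℝ G p) :
    pd1 G p = fderiv ℝ G p (1, 0) := by
  have h1 : HasDerivAt (fun x : ℝ => (x, p.2)) ((1 : ℝ), (0 : ℝ)) p.1 :=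
    (hasDerivAt_id p.1).prodMk (hasDerivAt_const p.1 p.2)
  exact (HasFDerivAt.comp_hasDerivAt (f := fun x : ℝ => (x, p.2)) p.1 h.hasFDerivAt h1).deriv

theorem aux_pd2 {G : ℝ × ℝ → ℝ} {p : ℝ × ℝ} (h : DifferentiableAt ℝ G p) :
    pd2 G p = fderiv ℝ G p (0, 1) := by
  have h1 : HasDerivAt (fun y : ℝ => (p.1, y)) ((0 : ℝ), (1 : ℝ)) p.2 :=
    (hasDerivAt_const p.2 p.1).prodMk (hasDerivAt_id p.2)
  exact (HasFDerivAt.comp_hasDerivAt (f := fun y : ℝ => (p.1, y)) p.2 h.hasFDerivAt h1).deriv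

theorem aux_chain {G : ℝ × ℝ → ℝ} {a b : ℝ → ℝ} {a' b' t : ℝ}
    (h : DifferentiableAt ℝ G (a t, b t)) (ha : HasDerivAt a a' t) (hb : HasDerivAt b b' t) :
    HasDerivAt (fun s => G (a s, b s)) (a' * pd1 G (a t, b t) + b' * pd2 G (a t, b t)) t := by
  have h2 := HasFDerivAt.comp_hasDerivAt (f := fun s : ℝ => (a s, b s)) t h.hasFDerivAt
    (ha.prodMk hb)
  rw [aux_pd1 h, aux_pd2 h]
  have e : ((a', b') : ℝ × ℝ) = a' • ((1 : ℝ), (0 : ℝ)) + b' • ((0 : ℝ), (1 : ℝ)) := by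
    ext <;> simp
  rw [e, map_add, map_smul, map_smul] at h2
  exact h2

theorem aux_E_mem (σ γ x z : ℝ) : Efun σ γ x z ∈ Set.Ioo (0 : ℝ) 1 := by
  unfold Efun
  have := Real.exp_pos ((γ / σ) * (z + x))
  constructor
  · positivity
  · rw [div_lt_one (by positivity)]; linarith

theorem aux_E_x (σ γ x z : ℝ) : HasDerivAt (fun x => Efun σ γ x z)
    ((γ / σ) * (Efun σ γ x z * (1 - Efun σ γ x z))) x := by
  unfold Efun
  have hp := Real.exp_pos ((γ / σ) * (z + x))
  have h1 : HasDerivAt (fun x => Real.exp ((γ / σ) * (z + x)))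
      (Real.exp ((γ / σ) * (z + x)) * ((γ / σ) * 1)) x :=
    (((hasDerivAt_id x).const_add z).const_mul (γ / σ)).exp
  have h2 := h1.div (h1.const_add 1) (by positivity)
  refine h2.congr_deriv ?_
  generalize γ / σ = c at *
  field_simp
  try ring

theorem aux_E_symm (σ γ x z : ℝ) : Efun σ γ x z = Efun σ γ z x := by
  unfold Efun; rw [add_comm]

theorem aux_E_z (σ γ x z : ℝ) : HasDerivAt (fun z => Efun σ γ x z)
    ((γ / σ) * (Efun σ γ x z * (1 - Efun σ γ x z))) z := by
  simp_rw [aux_E_symm σ γ x]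
  exact aux_E_x σ γ z x

theorem aux_smooth {F : ℝ × ℝ → ℝ} {p : ℝ × ℝ} (h : ContDiffAt ℝ 2 F p) :
    DifferentiableAt ℝ (pd1 F) p ∧ DifferentiableAt ℝ (pd2 F) p ∧
      pd1 (pd2 F) p = pd2 (pd1 F) p := by
  have hd : ∀ᶠ q in nhds p, DifferentiableAt ℝ F q :=
    (h.eventually (by simp)).mono fun q hq => hq.differentiableAt (by simp)
  have e1 : pd1 F =ᶠ[nhds p] fun q => fderiv ℝ F q (1, 0) := hd.mono fun q hq => aux_pd1 hq
  have e2 : pd2 F =ᶠ[nhds p] fun q => fderiv ℝ F q (0, 1) := hd.mono fun q hq => aux_pd2 hq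
  have hfd : DifferentiableAt ℝ (fderiv ℝ F) p :=
    (h.fderiv_right (m := 1) (by norm_num)).differentiableAt (by simp)
  have k : ∀ v : ℝ × ℝ, HasFDerivAt (fun q => fderiv ℝ F q v)
      ((fderiv ℝ (fderiv ℝ F) p).flip v) p := fun v => by
    have := hfd.hasFDerivAt.clm_apply (hasFDerivAt_const v p)
    simpa using this
  have d1 := (k (1, 0)).congr_of_eventuallyEq e1
  have d2 := (k (0, 1)).congr_of_eventuallyEq e2
  refine ⟨d1.differentiableAt, d2.differentiableAt, ?_⟩
  rw [aux_pd1 d2.differentiableAt, aux_pd2 d1.differentiableAt, d1.fderiv, d2.fderiv]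
  exact (h.isSymmSndFDerivAt (by simp)) (1, 0) (0, 1)

theorem statement5 (σ γ δ lam₁ lam₂ m₁ m₂ : ℝ)
    (hσ : 0 < σ) (hγ : 0 < γ) (hδ : 0 < δ) (hlam₁ : 0 < lam₁) (hlam₂ : 0 < lam₂)
    (hm : m₂ < m₁)
    (F : ℝ × ℝ → ℝ) (hF : ContDiffOn ℝ 2 F (Set.univ ×ˢ Set.Ioo (0 : ℝ) 1))
    (f : ℝ × ℝ → ℝ) (hf : ∀ x z : ℝ, f (x, z) = F (x, Efun σ γ x z)) :
    ∀ x z : ℝ,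
      mufun σ γ δ m₁ m₂ x z * pd1 f (x, z) + (σ ^ 2 / 2) * pd1 (pd1 f) (x, z)
          + qfun σ γ δ lam₁ lam₂ m₁ m₂ x z * pd2 f (x, z)
        = (mfun m₁ m₂ (Efun σ γ x z) - δ * x) * pd1 F (x, Efun σ γ x z)
          + (σ ^ 2 / 2) * pd1 (pd1 F) (x, Efun σ γ x z)
          + (lam₂ - (lam₁ + lam₂) * Efun σ γ x z) * pd2 F (x, Efun σ γ x z)
          + (γ ^ 2 / 2) * (Efun σ γ x z) ^ 2 * (1 - Efun σ γ x z) ^ 2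
            * pd2 (pd2 F) (x, Efun σ γ x z)
          + σ * γ * Efun σ γ x z * (1 - Efun σ γ x z) * pd2 (pd1 F) (x, Efun σ γ x z) := by
  have hC : ∀ x z, ContDiffAt ℝ 2 F (x, Efun σ γ x z) := fun x z =>
    hF.contDiffAt ((isOpen_univ.prod isOpen_Ioo).mem_nhds ⟨trivial, aux_E_mem σ γ x z⟩)
  have f1 : ∀ x z, pd1 f (x, z) = 1 * pd1 F (x, Efun σ γ x z)
      + (γ / σ) * (Efun σ γ x z * (1 - Efun σ γ x z)) * pd2 F (x, Efun σ γ x z) := by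
    intro x z
    unfold pd1
    simp only [hf]
    exact (aux_chain (a := fun x => x) (b := fun x => Efun σ γ x z)
      ((hC x z).differentiableAt (by simp)) (hasDerivAt_id x) (aux_E_x σ γ x z)).deriv
  have f2 : ∀ x z, pd2 f (x, z) = 0 * pd1 F (x, Efun σ γ x z)
      + (γ / σ) * (Efun σ γ x z * (1 - Efun σ γ x z)) * pd2 F (x, Efun σ γ x z) := by
    intro x z
    have := (aux_chain (a := fun _ => x) (b := fun z => Efun σ γ x z)
      ((hC x z).differentiableAt (by simp)) (hasDerivAt_const z x) (aux_E_z σ γ x z)).deriv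
    rw [← this, pd2]
    simp only [hf]
  intro x z
  obtain ⟨s1, s2, s3⟩ := aux_smooth (hC x z)
  have hE := aux_E_x σ γ x z
  have c1 := aux_chain (a := fun x => x) (b := fun x => Efun σ γ x z) s1 (hasDerivAt_id x) hE
  have c2 := aux_chain (a := fun x => x) (b := fun x => Efun σ γ x z) s2 (hasDerivAt_id x) hE
  have f11 := ((c1.const_mul 1).add
    (((hE.mul (hE.const_sub 1)).const_mul (γ / σ)).mul c2)).deriv
  have f11a : pd1 (pd1 f) (x, z) = deriv (fun x => 1 * pd1 F (x, Efun σ γ x z)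
      + (γ / σ) * (Efun σ γ x z * (1 - Efun σ γ x z)) * pd2 F (x, Efun σ γ x z)) x := by
    rw [pd1]
    simp only [f1]
  have f11' := f11a.trans f11
  rw [f11', f1, f2, s3]
  have hq : (γ / σ) * (Efun σ γ x z * (1 - Efun σ γ x z)) * ((σ / γ)
      * (1 + Real.exp (-(γ / σ) * (z + x))) * (lam₂ - lam₁ * Real.exp ((γ / σ) * (z + x))))
      = lam₂ - (lam₁ + lam₂) * Efun σ γ x z := by
    rw [neg_mul, Real.exp_neg]
    unfold Efun
    have hp := Real.exp_pos ((γ / σ) * (z + x))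
    generalize Real.exp ((γ / σ) * (z + x)) = e at *
    field_simp
    ring
  rw [← hq]
  unfold mufun qfun
  simp only [Pi.mul_apply]
  generalize Real.exp (-(γ / σ) * (z + x)) = e1
  generalize Real.exp ((γ / σ) * (z + x)) = e2
  generalize pd1 F _ = A
  generalize pd2 F _ = B
  generalize pd1 (pd1 F) _ = A1
  generalize pd2 (pd1 F) _ = A2
  generalize pd2 (pd2 F) _ = A3
  generalize Efun σ γ x z = y
  field_simp
  ring
end

section
/- For every z₀ ∈ ℝ there exists x ∈ ℝ such that q(x, z₀) ≠ 0; that is, no section x ↦ q(x, z₀) vanishes identically (the system admits no trap curve). -/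
theorem statement7 (σ γ δ lam₁ lam₂ m₁ m₂ : ℝ)
    (hσ : 0 < σ) (hγ : 0 < γ) (hδ : 0 < δ) (hlam₁ : 0 < lam₁) (hlam₂ : 0 < lam₂)
    (hm : m₂ < m₁) :
    ∀ z₀ : ℝ, ∃ x : ℝ, qfun σ γ δ lam₁ lam₂ m₁ m₂ x z₀ ≠ 0 := by
  intro z
  obtain ⟨A, hA⟩ : ∃ A, A = σ * γ / 2 + (σ / γ) * (lam₂ + lam₂) + |m₁| + |m₂| - δ * z := ⟨_, rfl⟩
  obtain ⟨k, hk⟩ : ∃ k, k = σ / γ := ⟨_, rfl⟩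
  have hk0 : 0 < k := by rw [hk]; positivity
  obtain ⟨B, hB⟩ : ∃ B, B = k * lam₁ := ⟨_, rfl⟩
  obtain ⟨C, hC⟩ : ∃ C, C = δ * k := ⟨_, rfl⟩
  have hB0 : 0 < B := by rw [hB]; positivity
  have hC0 : 0 < C := by rw [hC]; positivity
  obtain ⟨u, hu⟩ : ∃ u, u = 2 * (|A| + C) / B + 1 := ⟨_, rfl⟩
  have hu1 : 1 ≤ u := by
    rw [hu]
    have : 0 ≤ 2 * (|A| + C) / B := by positivity
    linarith
  have hBu : B * u = 2 * (|A| + C) + B := by rw [hu]; field_simp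
  refine ⟨k * u - z, ne_of_lt ?_⟩
  have e1 : (γ / σ) * (z + (k * u - z)) = u := by rw [hk]; field_simp; ring
  have e2 : -(γ / σ) * (z + (k * u - z)) = -u := by rw [neg_mul, e1]
  unfold qfun mfun Efun
  rw [e1, e2, ← hk]
  rw [← hk] at hA
  have hq := Real.quadratic_le_exp_of_nonneg (by linarith : 0 ≤ u)
  have hv1 : Real.exp (-u) ≤ 1 := Real.exp_le_one_iff.mpr (by linarith)
  have hv0 := Real.exp_pos (-u)
  have hvw : Real.exp (-u) * Real.exp u = 1 := by rw [← Real.exp_add]; simp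
  have hw0 := Real.exp_pos u
  generalize Real.exp u = w at *
  generalize Real.exp (-u) = v at *
  have hE0 : 0 ≤ w / (1 + w) := by positivity
  have hE1 : w / (1 + w) ≤ 1 := by rw [div_le_one (by linarith)]; linarith
  generalize w / (1 + w) = y at *
  have h1 : σ * γ * (y - 1 / 2) ≤ σ * γ / 2 := by nlinarith [mul_pos hσ hγ]
  have h2 : -(m₂ + (m₁ - m₂) * y) ≤ |m₁| + |m₂| := by
    nlinarith [neg_abs_le m₁, neg_abs_le m₂, abs_nonneg m₁, abs_nonneg m₂]
  have h3 : k * (1 + v) * (lam₂ - lam₁ * w) = k * lam₂ + k * lam₂ * v - B - B * w := by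
    rw [hB]; linear_combination (-k * lam₁) * hvw
  have h4 : k * lam₂ * v ≤ k * lam₂ := mul_le_of_le_one_right (by positivity) hv1
  have h5 : δ * (k * u - z) = C * u - δ * z := by rw [hC]; ring
  have h6 : B * (1 + u + u ^ 2 / 2) ≤ B * w := mul_le_mul_of_nonneg_left hq hB0.le
  have h7 : B * u * u = (2 * (|A| + C) + B) * u := by rw [hBu]
  have h8 : |A| ≤ |A| * u := le_mul_of_one_le_right (abs_nonneg A) hu1
  have h9 := le_abs_self A
  have h10 : 0 < B * u := by positivity
  rw [h3, h5]
  nlinarith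
end

section
/- For every (x,z) ∈ ℝ² there exists a natural number n ≥ 0 such that the n-th derivative at the point x of the function x′ ↦ q(x′, z) is nonzero (n = 0 meaning q(x,z) ≠ 0). -/
theorem statement8 (σ γ δ lam₁ lam₂ m₁ m₂ : ℝ)
    (hσ : 0 < σ) (hγ : 0 < γ) (hδ : 0 < δ) (hlam₁ : 0 < lam₁) (hlam₂ : 0 < lam₂)
    (hm : m₂ < m₁) :
    ∀ x z : ℝ, ∃ n : ℕ,
      iteratedDeriv n (fun x' => qfun σ γ δ lam₁ lam₂ m₁ m₂ x' z) x ≠ 0 := by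
  intro x z
  by_contra! H
  set f : ℝ → ℝ := fun x' => qfun σ γ δ lam₁ lam₂ m₁ m₂ x' z with hf
  have han : AnalyticOnNhd ℝ f Set.univ := by
    intro y _
    have h1 : 1 + Real.exp ((γ / σ) * (z + y)) ≠ 0 := by positivity
    have hE : AnalyticAt ℝ (fun x' => Efun σ γ x' z) y := by
      unfold Efun
      fun_prop (disch := exact h1)
    simp only [hf, qfun, mfun]
    fun_prop
  have htop : analyticOrderAt f x = ⊤ := by
    rw [ENat.eq_top_iff_forall_ge]
    intro n
    rw [natCast_le_analyticOrderAt_iff_iteratedDeriv_eq_zero (han x trivial)]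
    intro i _
    exact H i
  rw [analyticOrderAt_eq_top] at htop
  have h0 : ∀ y, f y = 0 := fun y =>
    han.eqOn_zero_of_preconnected_of_eventuallyEq_zero isPreconnected_univ
      (Set.mem_univ x) htop (Set.mem_univ y)
  obtain ⟨k, hk⟩ : ∃ k, k = σ / γ := ⟨_, rfl⟩
  have hkp : 0 < k := by rw [hk]; positivity
  have key : ∀ t : ℝ, 0 ≤ t →
      k * lam₁ / 2 * t ^ 2 ≤ (σ * γ - m₂ + 2 * k * lam₂ - δ * z) + δ * k * t := by
    intro t ht
    have h := h0 (k * t - z)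
    have e1 : (γ / σ) * (z + (k * t - z)) = t := by rw [hk]; field_simp; ring
    have e2 : -(γ / σ) * (z + (k * t - z)) = -t := by rw [neg_mul, e1]
    simp only [hf, qfun, mfun, Efun, e1, e2, ← hk] at h
    have hp := Real.exp_pos t
    obtain ⟨E, hE⟩ : ∃ E, E = Real.exp t / (1 + Real.exp t) := ⟨_, rfl⟩
    rw [← hE] at h
    have hE0 : 0 ≤ E := by rw [hE]; positivity
    have hE1 : E ≤ 1 := by rw [hE, div_le_one (by positivity)]; linarith
    have hn : Real.exp (-t) ≤ 1 := Real.exp_le_one_iff.2 (by linarith)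
    have hm1 : Real.exp (-t) * Real.exp t = 1 := by rw [← Real.exp_add]; simp
    have hq := Real.quadratic_le_exp_of_nonneg ht
    have ex : k * (1 + Real.exp (-t)) * (lam₂ - lam₁ * Real.exp t)
        = k * lam₂ + k * lam₂ * Real.exp (-t) - k * lam₁ * Real.exp t - k * lam₁ := by
      linear_combination (-k * lam₁) * hm1
    rw [ex] at h
    have b1 : σ * γ * (E - 1 / 2) ≤ σ * γ * 1 :=
      mul_le_mul_of_nonneg_left (by linarith) (by positivity)
    have b2 : 0 ≤ (m₁ - m₂) * E := mul_nonneg (by linarith) hE0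
    have b3 : k * lam₂ * Real.exp (-t) ≤ k * lam₂ * 1 :=
      mul_le_mul_of_nonneg_left hn (by positivity)
    have b4 : k * lam₁ * (t ^ 2 / 2) ≤ k * lam₁ * Real.exp t :=
      mul_le_mul_of_nonneg_left (by linarith) (by positivity)
    have b5 : 0 < k * lam₁ := by positivity
    linarith
  generalize σ * γ - m₂ + 2 * k * lam₂ - δ * z = C at key
  have ha : 0 < k * lam₁ / 2 := by positivity
  have hd : 0 < δ * k := by positivity
  generalize k * lam₁ / 2 = a at key ha
  generalize δ * k = d at key hd
  obtain ⟨s, hs⟩ : ∃ s, s = (|C| + d) / a + 1 := ⟨_, rfl⟩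
  have hs1 : 1 ≤ s := by
    rw [hs]
    have : 0 ≤ (|C| + d) / a := by positivity
    linarith
  have has : a * s = |C| + d + a := by rw [hs]; field_simp
  have h := key s (by linarith)
  have e : a * s ^ 2 = |C| * s + d * s + a * s := by linear_combination s * has
  have c1 : |C| * 1 ≤ |C| * s := mul_le_mul_of_nonneg_left hs1 (abs_nonneg C)
  have c2 : 0 < a * s := by positivity
  have c3 := le_abs_self C
  linarith
end

section
/- Fix γ > 0, λ₁ > 0, λ₂ > 0. Define m′ : (0,1) → ℝ by m′(x) := (2/(γ²x²(1−x)²)) · exp( 2·∫_{1/2}^x (λ₂ − (λ₁+λ₂)y)/(γ²y²(1−y)²) dy ). Then m′ is Lebesgue integrable on the interval (0,1), i.e. ∫₀¹ m′(x) dx < ∞. -/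
open MeasureTheory

lemma aux_bound (A k : ℝ) (hA : 0 < A) :
    ∃ C : ℝ, ∀ x ∈ Set.Ioo (0 : ℝ) 1, k * Real.log x - A / x ≤ C := by
  have hK : 0 < |k| + 1 := by positivity
  refine ⟨-((|k| + 1) * (1 + Real.log (A / (|k| + 1)))), ?_⟩
  rintro x ⟨h0, h1⟩
  set K := |k| + 1 with hKd
  have ha : 0 < A / K := by positivity
  have h2 : Real.log (A / K / x) ≤ A / K / x - 1 := Real.log_le_sub_one_of_pos (by positivity)
  rw [Real.log_div ha.ne' h0.ne'] at h2
  have hl : Real.log x ≤ 0 := Real.log_nonpos h0.le h1.le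
  have h3 : k * Real.log x ≤ K * (-Real.log x) := by
    have := neg_abs_le k
    nlinarith
  have h4 := mul_le_mul_of_nonneg_left h2 hK.le
  have h5 : K * (A / K / x - 1) = A / x - K := by field_simp
  rw [h5] at h4
  nlinarith

noncomputable def auxF (γ a b y : ℝ) : ℝ :=
  (b * (-y⁻¹ + Real.log y - Real.log (1 - y))
    - a * (Real.log y - Real.log (1 - y) + (1 - y)⁻¹)) / γ ^ 2

lemma auxF_deriv (γ a b y : ℝ) (hγ : 0 < γ) (h0 : 0 < y) (h1 : y < 1) :
    HasDerivAt (auxF γ a b) ((b - (a + b) * y) / (γ ^ 2 * y ^ 2 * (1 - y) ^ 2)) y := by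
  have h1' : 1 - y ≠ 0 := by linarith
  have d0 : HasDerivAt (fun y : ℝ => 1 - y) (-1) y := by
    simpa using (hasDerivAt_id y).const_sub 1
  have d1 := hasDerivAt_inv h0.ne'
  have d2 := Real.hasDerivAt_log h0.ne'
  have d3 := d0.log h1'
  have d4 := d0.fun_inv h1'
  have := ((((d1.neg.add d2).sub d3).const_mul b).sub
    (((d2.sub d3).add d4).const_mul a)).div_const (γ ^ 2)
  refine HasDerivAt.congr_deriv this ?_
  field_simp
  ring

lemma auxF_int (γ a b x : ℝ) (hγ : 0 < γ) (hx : x ∈ Set.Ioo (0 : ℝ) 1) :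
    ∫ y in (1 / 2 : ℝ)..x, (b - (a + b) * y) / (γ ^ 2 * y ^ 2 * (1 - y) ^ 2)
      = auxF γ a b x - auxF γ a b (1 / 2) := by
  have hsub : Set.uIcc (1 / 2 : ℝ) x ⊆ Set.Ioo 0 1 :=
    Set.OrdConnected.uIcc_subset Set.ordConnected_Ioo (by norm_num) hx
  apply intervalIntegral.integral_eq_sub_of_hasDerivAt
  · intro y hy
    exact auxF_deriv γ a b y hγ (hsub hy).1 (hsub hy).2
  · apply ContinuousOn.intervalIntegrable
    apply ContinuousOn.div (by fun_prop) (by fun_prop)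
    intro y hy
    have h1 := (hsub hy).1
    have h2 : 0 < 1 - y := by linarith [(hsub hy).2]
    positivity

theorem statement11 (γ lam₁ lam₂ : ℝ) (hγ : 0 < γ) (hlam₁ : 0 < lam₁) (hlam₂ : 0 < lam₂)
    (m' : ℝ → ℝ)
    (hm' : ∀ x ∈ Set.Ioo (0 : ℝ) 1,
      m' x = (2 / (γ ^ 2 * x ^ 2 * (1 - x) ^ 2))
        * Real.exp (2 * ∫ y in (1 / 2 : ℝ)..x,
            (lam₂ - (lam₁ + lam₂) * y) / (γ ^ 2 * y ^ 2 * (1 - y) ^ 2))) :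
    IntegrableOn m' (Set.Ioo (0 : ℝ) 1) volume := by
  set c := auxF γ lam₁ lam₂ (1 / 2) with hc
  have key : IntegrableOn (fun x => (2 / (γ ^ 2 * x ^ 2 * (1 - x) ^ 2))
      * Real.exp (2 * (auxF γ lam₁ lam₂ x - c))) (Set.Ioo (0 : ℝ) 1) volume := by
    set A := 2 * lam₂ / γ ^ 2 with hA
    set B := 2 * lam₁ / γ ^ 2 with hB
    obtain ⟨C, hC⟩ := aux_bound A (A - B - 2) (by positivity)
    obtain ⟨D, hD⟩ := aux_bound B (B - A - 2) (by positivity)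
    refine Measure.integrableOn_of_bounded (M := 2 / γ ^ 2 * Real.exp (C + D - 2 * c)) (s_finite := ?_) (f_mble := ?_) (f_bdd := ?_)
    · simp
    · apply Measurable.aestronglyMeasurable
      unfold auxF
      fun_prop
    · refine (ae_restrict_iff' measurableSet_Ioo).2 (Filter.Eventually.of_forall ?_)
      intro x hx
      have h0 := hx.1
      have h1 : 0 < 1 - x := by linarith [hx.2]
      have e1 := hC x hx
      have e2 := hD (1 - x) ⟨h1, by linarith⟩
      rw [Real.norm_of_nonneg (by positivity)]
      have e3 : 2 / (γ ^ 2 * x ^ 2 * (1 - x) ^ 2)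
          = 2 / γ ^ 2 * Real.exp (-2 * Real.log x - 2 * Real.log (1 - x)) := by
        have : -2 * Real.log x - 2 * Real.log (1 - x)
          = -(Real.log x + Real.log x + (Real.log (1 - x) + Real.log (1 - x))) := by ring
        rw [this, Real.exp_neg, Real.exp_add, Real.exp_add, Real.exp_add,
          Real.exp_log h0, Real.exp_log h1]
        field_simp
      rw [e3, mul_assoc, ← Real.exp_add]
      have e4 : 2 * auxF γ lam₁ lam₂ x = A * (-x⁻¹ + Real.log x - Real.log (1 - x))
          - B * (Real.log x - Real.log (1 - x) + (1 - x)⁻¹) := by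
        rw [hA, hB, auxF]; ring
      gcongr
      rw [mul_sub, e4]
      rw [div_eq_mul_inv] at e1 e2
      linarith
  refine key.congr_fun ?_ measurableSet_Ioo
  intro x hx
  simp only [hm' x hx, auxF_int γ lam₁ lam₂ x hγ hx, hc]
end

section
/- Let σ > 0, γ > 0, α ∈ ℝ, and let Û : ℝ² → ℝ be twice continuously differentiable, with partial derivatives Û_x, Û_z, Û_{xx}. Define z(x,y) := (σ/γ)·log(y/(1−y)) − x for (x,y) ∈ ℝ × (0,1) and V(x,y) := ∫_α^x Û(x′, z(x′,y)) dx′. Then for all (x,y) ∈ ℝ × (0,1): (i) V_x(x,y) = Û(x, z(x,y)); (ii) V_{xx}(x,y) = Û_x(x, z(x,y)) − Û_z(x, z(x,y)); (iii) V_{xy}(x,y) = Û_z(x, z(x,y)) · (σ/γ) · (1/(y(1−y))); (iv) V_y(x,y) = (σ/γ)·(1/(y(1−y))) · ∫_α^x Û_z(x′, z(x′,y)) dx′; (v) V_{yy}(x,y) = (σ/γ)·((2y−1)/(y²(1−y)²)) · ∫_α^x Û_z(x′, z(x′,y)) dx′ + (σ²/γ²)·(1/(y²(1−y)²)) · ( Û_z(α,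 z(α,y)) − Û_z(x, z(x,y)) ) + (σ²/γ²)·(1/(y²(1−y)²)) · ( Û_x(α, z(α,y)) − Û_x(x, z(x,y)) + ∫_α^x Û_{xx}(x′, z(x′,y)) dx′ ). -/
lemma pd1_eq {F : ℝ × ℝ → ℝ} (hF : Differentiable ℝ F) (p : ℝ × ℝ) :
    pd1 F p = fderiv ℝ F p (1, 0) := by
  have h2 : HasDerivAt (fun x : ℝ => (x, p.2)) ((1 : ℝ), (0 : ℝ)) p.1 :=
    (hasDerivAt_id p.1).prodMk (hasDerivAt_const p.1 p.2)
  have := (hF (p.1, p.2)).hasFDerivAt.comp_hasDerivAt p.1 h2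
  exact this.deriv

lemma pd2_eq {F : ℝ × ℝ → ℝ} (hF : Differentiable ℝ F) (p : ℝ × ℝ) :
    pd2 F p = fderiv ℝ F p (0, 1) := by
  have h2 : HasDerivAt (fun x : ℝ => (p.1, x)) ((0 : ℝ), (1 : ℝ)) p.2 :=
    (hasDerivAt_const p.2 p.1).prodMk (hasDerivAt_id p.2)
  have := (hF (p.1, p.2)).hasFDerivAt.comp_hasDerivAt p.2 h2
  exact this.deriv

lemma chain2 {F : ℝ × ℝ → ℝ} (hF : Differentiable ℝ F) {a b : ℝ → ℝ} {a' b' t : ℝ}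
    (ha : HasDerivAt a a' t) (hb : HasDerivAt b b' t) :
    HasDerivAt (fun s => F (a s, b s))
      (pd1 F (a t, b t) * a' + pd2 F (a t, b t) * b') t := by
  have := (hF (a t, b t)).hasFDerivAt.comp_hasDerivAt t (ha.prodMk hb)
  refine this.congr_deriv ?_
  rw [pd1_eq hF, pd2_eq hF]
  have : ((a', b') : ℝ × ℝ) = a' • (1, 0) + b' • (0, 1) := by simp
  rw [this, map_add, map_smul, map_smul, smul_eq_mul, smul_eq_mul]
  ring

lemma contDiff_pd {F : ℝ × ℝ → ℝ} {n m : WithTop ℕ∞} (hF : ContDiff ℝ n F) (h : m + 1 ≤ n) :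
    ContDiff ℝ m (pd1 F) ∧ ContDiff ℝ m (pd2 F) := by
  have hd : Differentiable ℝ F := hF.differentiable (by
    rintro rfl; simp at h)
  have e1 : pd1 F = fun p => fderiv ℝ F p (1, 0) := funext (pd1_eq hd)
  have e2 : pd2 F = fun p => fderiv ℝ F p (0, 1) := funext (pd2_eq hd)
  rw [e1, e2]
  have := hF.fderiv_right h
  exact ⟨this.clm_apply contDiff_const, this.clm_apply contDiff_const⟩

lemma param_deriv {F : ℝ × ℝ → ℝ} (hF : ContDiff ℝ 1 F) (α x c : ℝ) :
    HasDerivAt (fun c => ∫ t in α..x, F (t, c - t)) (∫ t in α..x, pd2 F (t, c - t)) c := by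
  have hd : Differentiable ℝ F := hF.differentiable (by simp)
  have hc : Continuous F := hF.continuous
  have hc2 : Continuous (pd2 F) := (contDiff_pd (m := 0) hF (by simp)).2.continuous
  have hK : IsCompact (Set.uIcc α x ×ˢ Metric.closedBall c 1) :=
    isCompact_uIcc.prod (isCompact_closedBall c 1)
  obtain ⟨M, hM⟩ := hK.exists_bound_of_continuousOn
    (f := fun p : ℝ × ℝ => pd2 F (p.1, p.2 - p.1)) (by fun_prop)
  refine (intervalIntegral.hasDerivAt_integral_of_dominated_loc_of_deriv_le
    (μ := MeasureTheory.volume) (F := fun c t => F (t, c - t))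
    (F' := fun c t => pd2 F (t, c - t)) (bound := fun _ => M)
    (s := Metric.ball c 1) (Metric.ball_mem_nhds c one_pos) ?_ ?_ ?_ ?_ ?_ ?_).2
  · exact Filter.Eventually.of_forall fun c =>
      (by fun_prop : Continuous fun t => F (t, c - t)).aestronglyMeasurable
  · exact (by fun_prop : Continuous fun t => F (t, c - t)).intervalIntegrable _ _
  · exact (by fun_prop : Continuous fun t => pd2 F (t, c - t)).aestronglyMeasurable
  · exact Filter.Eventually.of_forall fun t ht c' hc' =>
      hM (t, c') ⟨Set.uIoc_subset_uIcc ht, Metric.ball_subset_closedBall hc'⟩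
  · exact intervalIntegrable_const
  · refine Filter.Eventually.of_forall fun t ht c' hc' => ?_
    have := chain2 hd (hasDerivAt_const c' t) ((hasDerivAt_id c').sub_const t)
    simpa using this

lemma logit_deriv (k : ℝ) {y : ℝ} (hy : y ∈ Set.Ioo (0 : ℝ) 1) :
    HasDerivAt (fun y => k * Real.log (y / (1 - y))) (k * (1 / (y * (1 - y)))) y := by
  obtain ⟨h0, h1⟩ := hy
  have h1' : (1 - y) ≠ 0 := by linarith
  have h0' : y ≠ 0 := h0.ne'
  have := (((hasDerivAt_id y).div ((hasDerivAt_id y).const_sub 1) h1').log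
    (div_ne_zero h0' h1')).const_mul k
  refine this.congr_deriv ?_
  simp only [id]
  simp only [Pi.div_apply, id]
  field_simp
  ring

theorem statement12 (σ γ α : ℝ) (hσ : 0 < σ) (hγ : 0 < γ)
    (Uh : ℝ × ℝ → ℝ) (hUh : ContDiff ℝ 2 Uh)
    (V : ℝ × ℝ → ℝ)
    (hV : ∀ x y : ℝ, V (x, y) = ∫ x' in α..x, Uh (x', zfun σ γ x' y)) :
    ∀ x : ℝ, ∀ y ∈ Set.Ioo (0 : ℝ) 1,
      pd1 V (x, y) = Uh (x, zfun σ γ x y)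
      ∧ pd1 (pd1 V) (x, y) = pd1 Uh (x, zfun σ γ x y) - pd2 Uh (x, zfun σ γ x y)
      ∧ pd2 (pd1 V) (x, y) = pd2 Uh (x, zfun σ γ x y) * (σ / γ) * (1 / (y * (1 - y)))
      ∧ pd2 V (x, y)
          = (σ / γ) * (1 / (y * (1 - y))) * ∫ x' in α..x, pd2 Uh (x', zfun σ γ x' y)
      ∧ pd2 (pd2 V) (x, y)
          = (σ / γ) * ((2 * y - 1) / (y ^ 2 * (1 - y) ^ 2))
              * (∫ x' in α..x, pd2 Uh (x', zfun σ γ x' y))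
            + (σ ^ 2 / γ ^ 2) * (1 / (y ^ 2 * (1 - y) ^ 2))
              * (pd2 Uh (α, zfun σ γ α y) - pd2 Uh (x, zfun σ γ x y))
            + (σ ^ 2 / γ ^ 2) * (1 / (y ^ 2 * (1 - y) ^ 2))
              * (pd1 Uh (α, zfun σ γ α y) - pd1 Uh (x, zfun σ γ x y)
                  + ∫ x' in α..x, pd1 (pd1 Uh) (x', zfun σ γ x' y)) := by
  have hd : Differentiable ℝ Uh := hUh.differentiable (by simp)
  have hc : Continuous Uh := hUh.continuous
  have hU1 : ContDiff ℝ 1 Uh := hUh.of_le (by norm_num)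
  obtain ⟨hp1, hp2⟩ := contDiff_pd (m := 1) hUh (by norm_num)
  have hd1 := hp1.differentiable (by simp)
  have hd2 := hp2.differentiable (by simp)
  have hc11 : Continuous (pd1 (pd1 Uh)) := (contDiff_pd (m := 0) hp1 (by simp)).1.continuous
  have hc12 : Continuous (pd2 (pd1 Uh)) := (contDiff_pd (m := 0) hp1 (by simp)).2.continuous
  have hc22 : Continuous (pd2 (pd2 Uh)) := (contDiff_pd (m := 0) hp2 (by simp)).2.continuous
  have hsymm : ∀ p, pd1 (pd2 Uh) p = pd2 (pd1 Uh) p := by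
    intro p
    have e1 : pd1 Uh = fun p => fderiv ℝ Uh p (1, 0) := funext (pd1_eq hd)
    have e2 : pd2 Uh = fun p => fderiv ℝ Uh p (0, 1) := funext (pd2_eq hd)
    rw [pd1_eq hd2, pd2_eq hd1, e1, e2]
    have hdd : DifferentiableAt ℝ (fderiv ℝ Uh) p :=
      (hUh.fderiv_right (m := 1) (by norm_num)).differentiable (by simp) p
    rw [fderiv_clm_apply hdd (by fun_prop), fderiv_clm_apply hdd (by fun_prop)]
    have := (hUh.contDiffAt (x := p)).isSymmSndFDerivAt (by simp)
    simpa using this (1, 0) (0, 1)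
  have hz : ∀ x y, HasDerivAt (fun x => zfun σ γ x y) (-1) x := fun x y => by
    simpa [zfun] using (hasDerivAt_id x).const_sub ((σ / γ) * Real.log (y / (1 - y)))
  have hzc : ∀ y, Continuous (fun x => zfun σ γ x y) := fun y => by
    unfold zfun; fun_prop
  have hzy : ∀ x, ∀ y ∈ Set.Ioo (0 : ℝ) 1, HasDerivAt (fun y => zfun σ γ x y)
      ((σ / γ) * (1 / (y * (1 - y)))) y := fun x y hy => by
    unfold zfun
    exact (logit_deriv (σ / γ) hy).sub_const x
  have A : pd1 V = fun p => Uh (p.1, zfun σ γ p.1 p.2) := by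
    funext p
    have hcont : Continuous fun t => Uh (t, zfun σ γ t p.2) := by
      have := hzc p.2
      fun_prop
    simp only [pd1, hV]
    exact (hcont.integral_hasStrictDerivAt α p.1).hasDerivAt.deriv
  have B : ∀ F : ℝ × ℝ → ℝ, ContDiff ℝ 1 F → ∀ x, ∀ y ∈ Set.Ioo (0 : ℝ) 1,
      HasDerivAt (fun y => ∫ t in α..x, F (t, zfun σ γ t y))
        ((∫ t in α..x, pd2 F (t, zfun σ γ t y)) * ((σ / γ) * (1 / (y * (1 - y))))) y := by
    intro F hF x y hy
    exact (param_deriv hF α x _).comp y (logit_deriv (σ / γ) hy)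
  have C : ∀ x, ∀ y ∈ Set.Ioo (0 : ℝ) 1, pd2 V (x, y)
      = (σ / γ) * (1 / (y * (1 - y))) * ∫ x' in α..x, pd2 Uh (x', zfun σ γ x' y) := by
    intro x y hy
    simp only [pd2, hV]
    rw [mul_comm]
    exact (B Uh hU1 x y hy).deriv
  intro x y hy
  refine ⟨by rw [A], ?_, ?_, C x y hy, ?_⟩
  · rw [A]
    have := chain2 hd (hasDerivAt_id x) (hz x y)
    refine this.deriv.trans ?_
    simp only [id]
    ring
  · rw [A]
    have := chain2 hd (hasDerivAt_const y x) (hzy x y hy)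
    refine this.deriv.trans ?_
    ring
  · have hev : (fun y => pd2 V (x, y)) =ᶠ[nhds y] fun y =>
        (σ / γ) * (1 / (y * (1 - y))) * ∫ x' in α..x, pd2 Uh (x', zfun σ γ x' y) := by
      filter_upwards [isOpen_Ioo.mem_nhds hy] with y' hy' using C x y' hy'
    have h0 : y ≠ 0 := hy.1.ne'
    have h1 : 1 - y ≠ 0 := by linarith [hy.2]
    have hw : HasDerivAt (fun y : ℝ => (σ / γ) * (1 / (y * (1 - y))))
        ((σ / γ) * ((2 * y - 1) / (y ^ 2 * (1 - y) ^ 2))) y := by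
      have := ((hasDerivAt_const y (1 : ℝ)).div ((hasDerivAt_id y).mul
        ((hasDerivAt_id y).const_sub 1)) (mul_ne_zero h0 h1)).const_mul (σ / γ)
      refine this.congr_deriv ?_
      simp only [id, Pi.mul_apply]
      field_simp
      ring
    have key : (∫ t in α..x, pd2 (pd2 Uh) (t, zfun σ γ t y))
        = (pd2 Uh (α, zfun σ γ α y) - pd2 Uh (x, zfun σ γ x y))
          + (pd1 Uh (α, zfun σ γ α y) - pd1 Uh (x, zfun σ γ x y)
            + ∫ x' in α..x, pd1 (pd1 Uh) (x', zfun σ γ x' y)) := by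
      have hzc' := hzc y
      have i1 : IntervalIntegrable (fun t => pd1 (pd1 Uh) (t, zfun σ γ t y))
          MeasureTheory.volume α x :=
        (by fun_prop : Continuous fun t => pd1 (pd1 Uh) (t, zfun σ γ t y)).intervalIntegrable _ _
      have i2 : IntervalIntegrable (fun t => pd2 (pd2 Uh) (t, zfun σ γ t y))
          MeasureTheory.volume α x :=
        (by fun_prop : Continuous fun t => pd2 (pd2 Uh) (t, zfun σ γ t y)).intervalIntegrable _ _
      have hder : ∀ t ∈ Set.uIcc α x, HasDerivAt
          (fun t => pd1 Uh (t, zfun σ γ t y) + pd2 Uh (t, zfun σ γ t y))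
          (pd1 (pd1 Uh) (t, zfun σ γ t y) - pd2 (pd2 Uh) (t, zfun σ γ t y)) t := by
        intro t _
        have := (chain2 hd1 (hasDerivAt_id t) (hz t y)).add
          (chain2 hd2 (hasDerivAt_id t) (hz t y))
        refine this.congr_deriv ?_
        simp only [id, hsymm]
        ring
      have := intervalIntegral.integral_eq_sub_of_hasDerivAt hder (i1.sub i2)
      rw [intervalIntegral.integral_sub i1 i2] at this
      linarith
    have := (hw.mul (B (pd2 Uh) hp2 x y hy)).deriv
    refine (hev.deriv_eq.trans this).trans ?_
    rw [key]
    field_simp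
    ring
end

section
/- Let σ > 0, γ > 0, δ > 0, λ₁ > 0, λ₂ > 0, m₁ > m₂, α ∈ ℝ; set m(y) := m₂ + (m₁ − m₂)y and b(x,y) := m(y) − δx. Let c : ℝ → ℝ be continuously differentiable and Û : ℝ² → ℝ be twice continuously differentiable; define z(x,y) := (σ/γ)·log(y/(1−y)) − x, U(x,y) := Û(x, z(x,y)), V(x,y) := ∫_α^x U(x′,y) dx′, and λ(y) := c(α) + U(α,y)·b(α,y) + (σ²/2)·U_x(α,y) + σγ·y(1−y)·U_y(α,y). Then V is twice continuously differentiable on ℝ × (0,1) and for every (x,y) ∈ ℝ × (0,1): (L V)(x,y) + c(x) − λ(y) = ∫_α^x ( (L U)(x′,y) − δ·U(x′,y) + c′(x′) ) dx′, where for a twice continuously differentiable g : ℝ × (0,1) → ℝ, (L g)(x,y) := (m(y) − δx)·g_x(x,y) + (σ²/2)·g_{xx}(x,y) + (λ₂ − (λ₁+λ₂)y)·g_y(x,y) + (γ²/2)·y²(1−y)²·g_{yy}(x,y) + σγ·y(1−y)·g_{xy}(x,y). -/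
/-- The generator of the degenerate two-dimensional diffusion (inventory, belief):
`(L g)(x,y) = (m(y) − δx) g_x + (σ²/2) g_xx + (λ₂ − (λ₁+λ₂)y) g_y
  + (γ²/2) y²(1−y)² g_yy + σγ y(1−y) g_xy`. -/
noncomputable def genL (σ γ δ lam₁ lam₂ m₁ m₂ : ℝ) (g : ℝ × ℝ → ℝ) (p : ℝ × ℝ) : ℝ :=
  (mfun m₁ m₂ p.2 - δ * p.1) * pd1 g p
    + (σ ^ 2 / 2) * pd1 (pd1 g) p
    + (lam₂ - (lam₁ + lam₂) * p.2) * pd2 g p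
    + (γ ^ 2 / 2) * p.2 ^ 2 * (1 - p.2) ^ 2 * pd2 (pd2 g) p
    + σ * γ * p.2 * (1 - p.2) * pd2 (pd1 g) p

open Set Filter Topology MeasureTheory intervalIntegral in
lemma hasDerivAt_param {I : Set ℝ} (hI : IsOpen I) (f f' : ℝ × ℝ → ℝ)
    (hf : ContinuousOn f (univ ×ˢ I)) (hf' : ContinuousOn f' (univ ×ˢ I))
    (hd : ∀ t, ∀ y ∈ I, HasDerivAt (fun y => f (t, y)) (f' (t, y)) y)
    (a b y : ℝ) (hy : y ∈ I) :
    HasDerivAt (fun y => ∫ t in a..b, f (t, y)) (∫ t in a..b, f' (t, y)) y := by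
  obtain ⟨ε, hε, hball⟩ := Metric.nhds_basis_closedBall.mem_iff.1 (hI.mem_nhds hy)
  have slice : ∀ g : ℝ × ℝ → ℝ, ContinuousOn g (univ ×ˢ I) → ∀ y ∈ I,
      Continuous (fun t => g (t, y)) := by
    intro g hg y hy
    exact hg.comp_continuous (by fun_prop) (fun t => ⟨mem_univ _, hy⟩)
  have hK : IsCompact (uIcc a b ×ˢ Metric.closedBall y ε) :=
    isCompact_uIcc.prod (isCompact_closedBall y ε)
  obtain ⟨C, hC⟩ := hK.exists_bound_of_continuousOn
    (hf'.mono (prod_mono (subset_univ _) hball))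
  refine (intervalIntegral.hasDerivAt_integral_of_dominated_loc_of_deriv_le
    (F := fun y t => f (t, y)) (F' := fun y t => f' (t, y)) (bound := fun _ => C)
    (Metric.closedBall_mem_nhds y hε) ?_ ?_ ?_ ?_ ?_ ?_).2
  · filter_upwards [hI.mem_nhds hy] with z hz
    exact (slice f hf z hz).aestronglyMeasurable
  · exact (slice f hf y hy).intervalIntegrable _ _
  · exact (slice f' hf' y hy).aestronglyMeasurable
  · exact Eventually.of_forall fun t ht z hz => hC (t, z) ⟨uIoc_subset_uIcc ht, hz⟩
  · exact intervalIntegrable_const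
  · exact Eventually.of_forall fun t _ z hz => hd t z (hball hz)

/-- pointwise partials -/
lemma pd1_hasDerivAt {f : ℝ × ℝ → ℝ} {p : ℝ × ℝ} (h : DifferentiableAt ℝ f p) :
    HasDerivAt (fun x => f (x, p.2)) (fderiv ℝ f p (1, 0)) p.1 := by
  have h1 : HasDerivAt (fun x : ℝ => (x, p.2)) ((1 : ℝ), (0 : ℝ)) p.1 :=
    (hasDerivAt_id _).prodMk (hasDerivAt_const _ _)
  exact HasFDerivAt.comp_hasDerivAt (f := fun x : ℝ => (x, p.2)) p.1 h.hasFDerivAt h1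

lemma pd2_hasDerivAt {f : ℝ × ℝ → ℝ} {p : ℝ × ℝ} (h : DifferentiableAt ℝ f p) :
    HasDerivAt (fun y => f (p.1, y)) (fderiv ℝ f p (0, 1)) p.2 := by
  have h1 : HasDerivAt (fun y : ℝ => (p.1, y)) ((0 : ℝ), (1 : ℝ)) p.2 :=
    (hasDerivAt_const _ _).prodMk (hasDerivAt_id _)
  exact HasFDerivAt.comp_hasDerivAt (f := fun y : ℝ => (p.1, y)) p.2 h.hasFDerivAt h1

lemma pd1_eq_s13 {f : ℝ × ℝ → ℝ} {p : ℝ × ℝ} (h : DifferentiableAt ℝ f p) :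
    pd1 f p = fderiv ℝ f p (1, 0) := (pd1_hasDerivAt h).deriv

lemma pd2_eq_s13 {f : ℝ × ℝ → ℝ} {p : ℝ × ℝ} (h : DifferentiableAt ℝ f p) :
    pd2 f p = fderiv ℝ f p (0, 1) := (pd2_hasDerivAt h).deriv

lemma contDiffOn_pd1 {f : ℝ × ℝ → ℝ} {S : Set (ℝ × ℝ)} (hS : IsOpen S) {n : ℕ}
    (h : ContDiffOn ℝ (n + 1) f S) : ContDiffOn ℝ n (pd1 f) S := by
  have h1 : ContDiffOn ℝ n (fun p => fderiv ℝ f p (1, 0)) S :=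
    (h.fderiv_of_isOpen hS le_rfl).clm_apply contDiffOn_const
  exact h1.congr fun p hp => pd1_eq_s13
    ((h.differentiableOn (by simp)).differentiableAt (hS.mem_nhds hp))

lemma contDiffOn_pd2 {f : ℝ × ℝ → ℝ} {S : Set (ℝ × ℝ)} (hS : IsOpen S) {n : ℕ}
    (h : ContDiffOn ℝ (n + 1) f S) : ContDiffOn ℝ n (pd2 f) S := by
  have h1 : ContDiffOn ℝ n (fun p => fderiv ℝ f p (0, 1)) S :=
    (h.fderiv_of_isOpen hS le_rfl).clm_apply contDiffOn_const
  exact h1.congr fun p hp => pd2_eq_s13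
    ((h.differentiableOn (by simp)).differentiableAt (hS.mem_nhds hp))

lemma pd_symm {f : ℝ × ℝ → ℝ} {S : Set (ℝ × ℝ)} (hS : IsOpen S)
    (h : ContDiffOn ℝ 2 f S) {p : ℝ × ℝ} (hp : p ∈ S) :
    pd2 (pd1 f) p = pd1 (pd2 f) p := by
  have h2 : ContDiffOn ℝ ((1 : ℕ) + 1) f S := by
    simpa [one_add_one_eq_two] using h
  have hsym := (h.contDiffAt (hS.mem_nhds hp)).isSymmSndFDerivAt (by simp)
  have hD : DifferentiableAt ℝ (fderiv ℝ f) p :=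
    ((h2.fderiv_of_isOpen hS le_rfl).differentiableOn (by simp)).differentiableAt (hS.mem_nhds hp)
  have e1 : pd1 f =ᶠ[nhds p] fun p => fderiv ℝ f p (1, 0) := by
    filter_upwards [hS.mem_nhds hp] with q hq
    exact pd1_eq_s13 ((h.differentiableOn (by simp)).differentiableAt (hS.mem_nhds hq))
  have e2 : pd2 f =ᶠ[nhds p] fun p => fderiv ℝ f p (0, 1) := by
    filter_upwards [hS.mem_nhds hp] with q hq
    exact pd2_eq_s13 ((h.differentiableOn (by simp)).differentiableAt (hS.mem_nhds hq))
  rw [pd2_eq_s13 (((contDiffOn_pd1 hS h2).differentiableOn (by simp)).differentiableAt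
      (hS.mem_nhds hp)),
    pd1_eq_s13 (((contDiffOn_pd2 hS h2).differentiableOn (by simp)).differentiableAt
      (hS.mem_nhds hp)), e1.fderiv_eq, e2.fderiv_eq,
    fderiv_clm_apply hD (by fun_prop), fderiv_clm_apply hD (by fun_prop)]
  simpa using hsym.eq (0, 1) (1, 0)

open Set in
lemma prim_hasFDerivAt {G : ℝ × ℝ → ℝ} (hG : ContDiff ℝ 1 G) (α : ℝ) (p : ℝ × ℝ) :
    HasFDerivAt (fun p : ℝ × ℝ => ∫ t in α..p.1, G (t, p.2))
      (G p • ContinuousLinearMap.fst ℝ ℝ ℝ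
        + (∫ t in α..p.1, pd2 G (t, p.2)) • ContinuousLinearMap.snd ℝ ℝ ℝ) p := by
  have h2 : Continuous (pd2 G) := by
    have := contDiffOn_pd2 (n := 0) isOpen_univ (f := G) (by simpa using hG.contDiffOn)
    simpa [continuousOn_univ] using this.continuousOn
  have hI : Continuous fun p : ℝ × ℝ => ∫ t in α..p.1, pd2 G (t, p.2) :=
    intervalIntegral.continuous_parametric_intervalIntegral_of_continuous
      (f := fun (p : ℝ × ℝ) t => pd2 G (t, p.2)) (by unfold Function.uncurry; fun_prop) continuous_fst
  have hGc := hG.continuous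
  have key := (hasStrictFDerivAt_uncurry_coprod (𝕜 := ℝ) (u := p)
    (f := fun x y : ℝ => ∫ t in α..x, G (t, y))
    (f₁ := fun x y => G (x, y) • ContinuousLinearMap.id ℝ ℝ)
    (f₂ := fun x y => (∫ t in α..x, pd2 G (t, y)) • ContinuousLinearMap.id ℝ ℝ)
    ?_ ?_ ?_ ?_).hasFDerivAt
  · refine HasFDerivAt.congr_fderiv key ?_
    ext
    · change G p * 1 + _ * 0 = G p * 1 + _ * 0
      simp
    · change G p * 0 + _ * 1 = G p * 0 + _ * 1
      simp only [mul_zero, mul_one]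
  · refine Filter.Eventually.of_forall fun v => ?_
    have hc : Continuous fun t => G (t, v.2) := by fun_prop
    have := (hc.integral_hasStrictDerivAt α v.1).hasDerivAt.hasFDerivAt
    refine HasFDerivAt.congr_fderiv this ?_
    ext
    change (1 : ℝ) * _ = _ * (1 : ℝ)
    rw [one_mul, mul_one]
  · refine Filter.Eventually.of_forall fun v => ?_
    have := (hasDerivAt_param isOpen_univ G (pd2 G) hGc.continuousOn h2.continuousOn
      (fun t y _ => by
        have := pd2_hasDerivAt (p := (t, y)) ((hG.differentiable (by simp)) (t, y))
        rwa [← pd2_eq_s13 ((hG.differentiable (by simp)) (t, y))] at this)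
      α v.1 v.2 (mem_univ _)).hasFDerivAt
    refine HasFDerivAt.congr_fderiv this ?_
    ext
    change (1 : ℝ) * _ = _ * (1 : ℝ)
    rw [one_mul, mul_one]
  · refine Continuous.continuousAt ?_
    change Continuous fun p : ℝ × ℝ => G (p.1, p.2) • ContinuousLinearMap.id ℝ ℝ
    fun_prop
  · refine Continuous.continuousAt ?_
    change Continuous fun p : ℝ × ℝ => (∫ t in α..p.1, pd2 G (t, p.2)) • ContinuousLinearMap.id ℝ ℝ
    exact Continuous.smul hI continuous_const

lemma prim_contDiff_one {G : ℝ × ℝ → ℝ} (hG : ContDiff ℝ 1 G) (α : ℝ) :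
    ContDiff ℝ 1 (fun p : ℝ × ℝ => ∫ t in α..p.1, G (t, p.2)) := by
  have h2 : Continuous (pd2 G) := by
    have := contDiffOn_pd2 (n := 0) isOpen_univ (f := G) (by simpa using hG.contDiffOn)
    simpa [continuousOn_univ] using this.continuousOn
  rw [contDiff_one_iff_hasFDerivAt]
  refine ⟨_, ?_, prim_hasFDerivAt hG α⟩
  have hI : Continuous fun p : ℝ × ℝ => ∫ t in α..p.1, pd2 G (t, p.2) :=
    intervalIntegral.continuous_parametric_intervalIntegral_of_continuous
      (f := fun (p : ℝ × ℝ) t => pd2 G (t, p.2)) (by unfold Function.uncurry; fun_prop) continuous_fst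
  exact (hG.continuous.smul continuous_const).add (Continuous.smul hI continuous_const)

lemma prim_contDiff_two {G : ℝ × ℝ → ℝ} (hG : ContDiff ℝ 2 G) (α : ℝ) :
    ContDiff ℝ 2 (fun p : ℝ × ℝ => ∫ t in α..p.1, G (t, p.2)) := by
  have hG1 : ContDiff ℝ 1 G := hG.of_le (by norm_num)
  have h2 : ContDiff ℝ 1 (pd2 G) := by
    have := contDiffOn_pd2 (n := 1) isOpen_univ (f := G)
      (by simpa [one_add_one_eq_two] using hG.contDiffOn)
    simpa [contDiffOn_univ] using this
  have := (contDiff_succ_iff_hasFDerivAt (𝕜 := ℝ) (n := 1)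
    (f := fun p : ℝ × ℝ => ∫ t in α..p.1, G (t, p.2))).2
    ⟨_, by
      exact (hG1.smul contDiff_const).add
        (ContDiff.smul (prim_contDiff_one h2 α) contDiff_const), prim_hasFDerivAt hG1 α⟩
  simpa [one_add_one_eq_two] using this

theorem statement13 (σ γ δ lam₁ lam₂ m₁ m₂ α : ℝ)
    (hσ : 0 < σ) (hγ : 0 < γ) (hδ : 0 < δ) (hlam₁ : 0 < lam₁) (hlam₂ : 0 < lam₂)
    (hm : m₂ < m₁)
    (c : ℝ → ℝ) (hc : ContDiff ℝ 1 c)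
    (Uh : ℝ × ℝ → ℝ) (hUh : ContDiff ℝ 2 Uh)
    (U : ℝ × ℝ → ℝ) (hUdef : ∀ x y : ℝ, U (x, y) = Uh (x, zfun σ γ x y))
    (V : ℝ × ℝ → ℝ) (hVdef : ∀ x y : ℝ, V (x, y) = ∫ x' in α..x, U (x', y))
    (lam : ℝ → ℝ)
    (hlam : ∀ y : ℝ, lam y = c α + U (α, y) * (mfun m₁ m₂ y - δ * α)
        + (σ ^ 2 / 2) * pd1 U (α, y) + σ * γ * y * (1 - y) * pd2 U (α, y)) :
    ContDiffOn ℝ 2 V (Set.univ ×ˢ Set.Ioo (0 : ℝ) 1)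
      ∧ ∀ x : ℝ, ∀ y ∈ Set.Ioo (0 : ℝ) 1,
        genL σ γ δ lam₁ lam₂ m₁ m₂ V (x, y) + c x - lam y
          = ∫ x' in α..x,
              (genL σ γ δ lam₁ lam₂ m₁ m₂ U (x', y) - δ * U (x', y) + deriv c x') := by
  set S : Set (ℝ × ℝ) := Set.univ ×ˢ Set.Ioo (0 : ℝ) 1 with hSdef
  have hS : IsOpen S := isOpen_univ.prod isOpen_Ioo
  let G : ℝ × ℝ → ℝ := fun p => Uh (p.1, (σ / γ) * p.2 - p.1)
  let l : ℝ → ℝ := fun y => Real.log (y / (1 - y))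
  have hG : ContDiff ℝ 2 G := hUh.comp (by fun_prop)
  have hUG : U = fun p => G (p.1, l p.2) := by
    funext p
    exact hUdef p.1 p.2
  have hmap : ContDiffOn ℝ 2 (fun p : ℝ × ℝ => (p.1, l p.2)) S := by
    refine contDiffOn_fst.prodMk ?_
    refine ContDiffOn.log (contDiffOn_snd.div (contDiffOn_const.sub contDiffOn_snd) ?_) ?_
    · rintro p ⟨-, h0, h1⟩
      exact (sub_pos.2 h1).ne'
    · rintro p ⟨-, h0, h1⟩
      exact (div_pos h0 (sub_pos.2 h1)).ne'
  have hU : ContDiffOn ℝ 2 U S := by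
    rw [hUG]
    exact hG.comp_contDiffOn hmap
  have hVG : V = fun p => (fun q : ℝ × ℝ => ∫ t in α..q.1, G (t, q.2)) (p.1, l p.2) := by
    funext p
    change V (p.1, p.2) = _
    rw [hVdef, hUG]
  have hV : ContDiffOn ℝ 2 V S := by
    rw [hVG]
    exact (prim_contDiff_two hG α).comp_contDiffOn hmap
  refine ⟨hV, ?_⟩
  intro x y hy
  have hmem : ∀ t : ℝ, ∀ z ∈ Set.Ioo (0 : ℝ) 1, (t, z) ∈ S := fun t z hz => ⟨Set.mem_univ _, hz⟩
  have hU2 : ContDiffOn ℝ ((1 : ℕ) + 1) U S := by simpa [one_add_one_eq_two] using hU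
  have hU1 := contDiffOn_pd1 hS hU2
  have hU2' := contDiffOn_pd2 hS hU2
  have hU11 := (contDiffOn_pd1 (n := 0) hS (f := pd1 U) (by simpa using hU1)).continuousOn
  have hU12 := (contDiffOn_pd1 (n := 0) hS (f := pd2 U) (by simpa using hU2')).continuousOn
  have hU22 := (contDiffOn_pd2 (n := 0) hS (f := pd2 U) (by simpa using hU2')).continuousOn
  have slice : ∀ g : ℝ × ℝ → ℝ, ContinuousOn g S → ∀ z ∈ Set.Ioo (0 : ℝ) 1,
      Continuous (fun t => g (t, z)) := by
    intro g hg z hz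
    exact hg.comp_continuous (by fun_prop) (fun t => hmem t z hz)
  have d1 : ∀ g : ℝ × ℝ → ℝ, DifferentiableOn ℝ g S → ∀ t : ℝ, ∀ z ∈ Set.Ioo (0 : ℝ) 1,
      HasDerivAt (fun t => g (t, z)) (pd1 g (t, z)) t := by
    intro g hg t z hz
    have hd := hg.differentiableAt (hS.mem_nhds (hmem t z hz))
    rw [pd1_eq_s13 hd]
    exact pd1_hasDerivAt hd
  have d2 : ∀ g : ℝ × ℝ → ℝ, DifferentiableOn ℝ g S → ∀ t : ℝ, ∀ z ∈ Set.Ioo (0 : ℝ) 1,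
      HasDerivAt (fun z => g (t, z)) (pd2 g (t, z)) z := by
    intro g hg t z hz
    have hd := hg.differentiableAt (hS.mem_nhds (hmem t z hz))
    rw [pd2_eq_s13 hd]
    exact pd2_hasDerivAt hd
  have dU := hU.differentiableOn (by simp)
  have dU1 := hU1.differentiableOn (by simp)
  have dU2 := hU2'.differentiableOn (by simp)
  have v1 : ∀ t : ℝ, ∀ z ∈ Set.Ioo (0 : ℝ) 1, pd1 V (t, z) = U (t, z) := by
    intro t z hz
    simp only [pd1, hVdef]
    exact ((slice U hU.continuousOn z hz).integral_hasStrictDerivAt α t).hasDerivAt.deriv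
  have v11 : pd1 (pd1 V) (x, y) = pd1 U (x, y) := by
    change deriv (fun t => pd1 V (t, y)) x = deriv (fun t => U (t, y)) x
    simp only [fun t => v1 t y hy]
  have v21 : pd2 (pd1 V) (x, y) = pd2 U (x, y) := by
    change deriv (fun z => pd1 V (x, z)) y = deriv (fun z => U (x, z)) y
    refine Filter.EventuallyEq.deriv_eq ?_
    filter_upwards [isOpen_Ioo.mem_nhds hy] with z hz
    exact v1 x z hz
  have v2 : ∀ z ∈ Set.Ioo (0 : ℝ) 1, pd2 V (x, z) = ∫ t in α..x, pd2 U (t, z) := by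
    intro z hz
    simp only [pd2, hVdef]
    exact (hasDerivAt_param isOpen_Ioo U (pd2 U) hU.continuousOn hU2'.continuousOn
      (d2 U dU) α x z hz).deriv
  have v22 : pd2 (pd2 V) (x, y) = ∫ t in α..x, pd2 (pd2 U) (t, y) := by
    change deriv (fun z => pd2 V (x, z)) y = _
    have he : (fun z => pd2 V (x, z)) =ᶠ[nhds y] fun z => ∫ t in α..x, pd2 U (t, z) := by
      filter_upwards [isOpen_Ioo.mem_nhds hy] with z hz
      exact v2 z hz
    rw [he.deriv_eq]
    exact (hasDerivAt_param isOpen_Ioo (pd2 U) (pd2 (pd2 U)) hU2'.continuousOn hU22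
      (d2 (pd2 U) dU2) α x y hy).deriv
  have cU := slice U hU.continuousOn y hy
  have cU1 := slice _ hU1.continuousOn y hy
  have cU2 := slice _ hU2'.continuousOn y hy
  have cU11 := slice _ hU11 y hy
  have cU12 := slice _ hU12 y hy
  have cU22 := slice _ hU22 y hy
  have cc : Continuous (deriv c) := hc.continuous_deriv le_rfl
  let H : ℝ → ℝ := fun t => (mfun m₁ m₂ y - δ * t) * U (t, y) + (σ ^ 2 / 2) * pd1 U (t, y)
    + σ * γ * y * (1 - y) * pd2 U (t, y) + c t
  let H' : ℝ → ℝ := fun t => ((-δ) * U (t, y) + (mfun m₁ m₂ y - δ * t) * pd1 U (t, y))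
    + (σ ^ 2 / 2) * pd1 (pd1 U) (t, y)
    + σ * γ * y * (1 - y) * pd1 (pd2 U) (t, y) + deriv c t
  have hH : ∀ t, HasDerivAt H (H' t) t := by
    intro t
    have hb : HasDerivAt (fun t => mfun m₁ m₂ y - δ * t) (-δ) t := by
      simpa using ((hasDerivAt_id t).const_mul δ).const_sub (mfun m₁ m₂ y)
    exact (((hb.mul (d1 U dU t y hy)).add ((d1 _ dU1 t y hy).const_mul _)).add
      ((d1 _ dU2 t y hy).const_mul _)).add (hc.differentiable (by simp) t).hasDerivAt
  have cH' : Continuous H' := by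
    have hb : Continuous fun t : ℝ => mfun m₁ m₂ y - δ * t := by fun_prop
    exact ((((cU.const_mul _).add (hb.mul cU1)).add (cU11.const_mul _)).add
      (cU12.const_mul _)).add cc
  have hint : (∫ t in α..x, H' t) = H x - H α :=
    intervalIntegral.integral_eq_sub_of_hasDerivAt (fun t _ => hH t) (cH'.intervalIntegrable _ _)
  have hrhs : ∀ t : ℝ, genL σ γ δ lam₁ lam₂ m₁ m₂ U (t, y) - δ * U (t, y) + deriv c t
      = H' t + ((lam₂ - (lam₁ + lam₂) * y) * pd2 U (t, y)
        + (γ ^ 2 / 2) * y ^ 2 * (1 - y) ^ 2 * pd2 (pd2 U) (t, y)) := by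
    intro t
    simp only [genL, H', pd_symm hS hU (hmem t y hy)]
    ring
  simp only [hrhs]
  have i2 := (cU2.const_mul (lam₂ - (lam₁ + lam₂) * y)).intervalIntegrable (μ := MeasureTheory.volume) α x
  have i22 := (cU22.const_mul ((γ ^ 2 / 2) * y ^ 2 * (1 - y) ^ 2)).intervalIntegrable
    (μ := MeasureTheory.volume) α x
  have hsum : (∫ t in α..x, (H' t + ((lam₂ - (lam₁ + lam₂) * y) * pd2 U (t, y)
        + (γ ^ 2 / 2) * y ^ 2 * (1 - y) ^ 2 * pd2 (pd2 U) (t, y))))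
      = (H x - H α) + ((lam₂ - (lam₁ + lam₂) * y) * (∫ t in α..x, pd2 U (t, y))
        + (γ ^ 2 / 2) * y ^ 2 * (1 - y) ^ 2 * ∫ t in α..x, pd2 (pd2 U) (t, y)) := by
    rw [intervalIntegral.integral_add (cH'.intervalIntegrable _ _) (i2.add i22), hint,
      intervalIntegral.integral_add i2 i22,
      intervalIntegral.integral_const_mul, intervalIntegral.integral_const_mul]
  rw [hsum]
  simp only [genL, v1 x y hy, v11, v21, v2 y hy, v22, hlam, H]
  ring
end
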